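/- Let (A,B) be an invertible Jones pair of n×n complex matrices. Then N_{A,B} = N_{A,Bᵀ}. If moreover A is symmetric, then N_{A,B} is closed under transposition: M ∈ N_{A,B} if and only if Mᵀ ∈ N_{A,B}. -/

import Mathlib

open Matrix

variable {m : Type*} [Fintype m] [DecidableEq m]

/-- The Schur (entrywise) inverse `A^(-)` of a matrix: `(A^(-))_{ij} = (A_{ij})⁻¹`. -/
noncomputable def sinv (A : Matrix m m ℂ) : Matrix m m ℂ := Matrix.of fun i j => (A i j)⁻¹

/-- A type-II matrix: a Schur invertible matrix `W` with `W * (W^(-))ᵀ = n • I`,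
where `n` is the size of the matrix. -/
def IsTypeII (A : Matrix m m ℂ) : Prop :=
  (∀ i j, A i j ≠ 0) ∧ A * (sinv A)ᵀ = (Fintype.card m : ℂ) • (1 : Matrix m m ℂ)

/-- `v_{ij} = (A e_i) ∘ (B e_j)`: the entrywise product of column `i` of `A`
with column `j` of `B`. -/
def colProd (A B : Matrix m m ℂ) (i j : m) : m → ℂ := fun k => A k i * B k j

/-- Membership in the Nomura algebra `N_{A,B}`: every `v_{ij}` is an eigenvector of `M`. -/
def InNomura (A B M : Matrix m m ℂ) : Prop :=
  ∀ i j, ∃ c : ℂ, M.mulVec (colProd A B i j) = c • colProd A B i j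

/-- `S = Θ_{A,B}(M)`: the matrix of eigenvalues, i.e. `M v_{ij} = S_{ij} v_{ij}` for all `i,j`. -/
def IsTheta (A B M S : Matrix m m ℂ) : Prop :=
  ∀ i j, M.mulVec (colProd A B i j) = S i j • colProd A B i j

/-- `(A,B)` is a Jones pair: `A` invertible, `B` Schur invertible, and
`X_A Δ_B X_A = Δ_B X_A Δ_B` and `X_A Δ_{Bᵀ} X_A = Δ_{Bᵀ} X_A Δ_{Bᵀ}`
as operators on matrices. -/
def IsJonesPair (A B : Matrix m m ℂ) : Prop :=
  IsUnit A ∧ (∀ i j, B i j ≠ 0) ∧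
  (∀ M : Matrix m m ℂ, A * (B ⊙ (A * M)) = B ⊙ (A * (B ⊙ M))) ∧
  (∀ M : Matrix m m ℂ, A * (Bᵀ ⊙ (A * M)) = Bᵀ ⊙ (A * (Bᵀ ⊙ M)))

/-- An invertible Jones pair: a Jones pair in which moreover `A` is Schur
invertible and `B` is invertible. -/
def IsInvertibleJonesPair (A B : Matrix m m ℂ) : Prop :=
  IsJonesPair A B ∧ (∀ i j, A i j ≠ 0) ∧ IsUnit B

/-- `W` is a spin model: for some `d` with `d² = n`, `(d⁻¹ W, W^(-))` is an
invertible Jones pair. -/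
def IsSpinModel (W : Matrix m m ℂ) : Prop :=
  ∃ d : ℂ, d ^ 2 = (Fintype.card m : ℂ) ∧ IsInvertibleJonesPair (d⁻¹ • W) (sinv W)

/-- Given an invertible Jones pair `(A,B)` with `A` symmetric, `K` is paired with
`H ∈ N_{A,B}` if `Kᵀ ∈ N_{A,Bᵀ}` and `Θ_{A,B}(H) = (Θ_{A,Bᵀ}(Kᵀ))ᵀ`. -/
def Paired (A B H K : Matrix m m ℂ) : Prop :=
  ∃ S : Matrix m m ℂ, IsTheta A B H S ∧ IsTheta A Bᵀ Kᵀ Sᵀ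

/-- The `4n × 4n` matrix with `4 × 4` block structure
`[[P, Q, R, R], [Q, P, R, R], [S, S, T, U], [S, S, U, T]]`. -/
def blockMat {n : ℕ} (P Q R S T U : Matrix (Fin n) (Fin n) ℂ) :
    Matrix (Fin 4 × Fin n) (Fin 4 × Fin n) ℂ :=
  Matrix.of fun x y =>
    (![![P, Q, R, R], ![Q, P, R, R], ![S, S, T, U], ![S, S, U, T]] x.1 y.1) x.2 y.2

/-- Yamada's `4n × 4n` matrix `V` built from `A`, `B` and `d` with `d² = n`. -/
noncomputable def Vmat {n : ℕ} (A B : Matrix (Fin n) (Fin n) ℂ) (d : ℂ) :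
    Matrix (Fin 4 × Fin n) (Fin 4 × Fin n) ℂ :=
  blockMat (d • A) (-(d • A)) (sinv B) (sinv B)ᵀ (d • A) (-(d • A))

/-!
Evaluated on matrix units, the two Jones relations give `Θ_{A,B}(A) = B` and
`Θ_{A,Bᵀ}(A) = Bᵀ`.

Equality `N_{A,B} = N_{A,Bᵀ}`: the columns of `B` and those of `Bᵀ` are therefore two common
eigenbases for the conjugates of `A` by the matrices `diagonal (A.col i)`. A column of `Bᵀ` has a
nonzero coordinate along some column of `B`, and then the eigenvalues of the two agree for every
`i`; but these eigenvalues are precisely the entries of the columns, so the columns coincide.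

Transposition: `Θ_{A,B}(A) = B` makes the matrix `B ⊙ (B⁻¹)ᵀ`, whose row and column sums are all
`1`, of rank one; it is therefore constant, which is to say that `B` is type II. For type II `B` the
relation `Θ_{A,B}(M) = S` has a dual description, in which `M` becomes a matrix of eigenvalues for
`S`. Comparing the dual descriptions of `Θ_{A,B}(M) = B * F` and `Θ_{A,B}(A) = B` shows that
`M ∈ N_{A,B}` if and only if `M ⊙ A^(-)` is the matrix of eigenvalues of some `F` in the Nomura
algebra of `Bᵀ`. Transposing `F` transposes its matrix of eigenvalues, and for symmetric `A` this
replaces `M` by `Mᵀ`.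
-/

variable {ι : Type*} {A B F M S : Matrix ι ι ℂ}

theorem sinv_sinv (A : Matrix ι ι ℂ) : sinv (sinv A) = A := by
  ext
  simp only [sinv, of_apply, inv_inv]

variable [Fintype ι]

section Theta

theorem inNomura_iff_exists_isTheta : InNomura A B M ↔ ∃ S, IsTheta A B M S := by
  simp only [InNomura, Classical.skolem]
  rfl

theorem isTheta_iff_sum_eq :
    IsTheta A B M S ↔ ∀ i j l, ∑ k, M l k * (A k i * B k j) = S i j * (A l i * B l j) := by
  simp only [IsTheta, funext_iff]
  rfl

theorem isTheta_comm : IsTheta A B M S ↔ IsTheta B A M Sᵀ := by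
  simp only [isTheta_iff_sum_eq, transpose_apply, mul_comm (A _ _)]
  exact forall_comm

theorem isTheta_self_of_mul_hadamard
    (h : ∀ M : Matrix ι ι ℂ, A * (B ⊙ (A * M)) = B ⊙ (A * (B ⊙ M))) : IsTheta A B A B := by
  classical
  refine isTheta_iff_sum_eq.2 fun i j l => ?_
  have h_lj := congrFun (congrFun (h (single i j 1)) l) j
  simp only [mul_apply, hadamard_apply, single_apply, mul_ite, mul_one, mul_zero, and_true,
    Finset.sum_ite_eq, Finset.mem_univ, if_true] at h_lj
  calc ∑ k, A l k * (A k i * B k j) = ∑ k, A l k * (B k j * A k i) := by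
        simp only [mul_comm (A _ i)]
    _ = B i j * (A l i * B l j) := by rw [h_lj]; ring

theorem isTheta_iff_mul_diagonal_col_mul [DecidableEq ι] :
    IsTheta A B M S ↔
      ∀ i, M * diagonal (A.col i) * B = diagonal (A.col i) * B * diagonal (S i) := by
  refine isTheta_iff_sum_eq.trans (forall_congr' fun i => ?_)
  rw [forall_comm, ← Matrix.ext_iff]
  refine forall₂_congr fun l j => ?_
  rw [mul_apply, mul_diagonal, diagonal_mul, mul_comm _ (S i j)]
  simp only [mul_diagonal, col_apply, mul_assoc]

end Theta

variable [DecidableEq ι]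

section Columns

variable {B' M' S' : Matrix ι ι ℂ}

theorem isUnit_diagonal_col {K : Type*} [Field K] {A : Matrix ι ι K} {i : ι}
    (hi : ∀ k, A k i ≠ 0) : IsUnit (diagonal (A.col i)) :=
  isUnit_diagonal.2 <| Pi.isUnit_iff.2 fun k => (hi k).isUnit

theorem IsTheta.diagonal_mul_inv_mul {i : ι} (hi : ∀ k, A k i ≠ 0) (hB : IsUnit B)
    (h : IsTheta A B M S) (h' : IsTheta A B' M S') :
    diagonal (S i) * (B⁻¹ * B') = B⁻¹ * B' * diagonal (S' i) := by
  have hdet := (isUnit_iff_isUnit_det B).1 hB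
  refine ((isUnit_diagonal_col hi).mul hB).mul_left_cancel ?_
  calc diagonal (A.col i) * B * (diagonal (S i) * (B⁻¹ * B'))
      = M * diagonal (A.col i) * B * (B⁻¹ * B') := by
        rw [isTheta_iff_mul_diagonal_col_mul.1 h, mul_assoc (_ * B)]
    _ = M * diagonal (A.col i) * B' := by rw [mul_assoc _ B, mul_nonsing_inv_cancel_left _ _ hdet]
    _ = diagonal (A.col i) * B' * diagonal (S' i) := isTheta_iff_mul_diagonal_col_mul.1 h' i
    _ = diagonal (A.col i) * B * (B⁻¹ * B' * diagonal (S' i)) := by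
        simp only [mul_assoc, mul_nonsing_inv_cancel_left _ _ hdet]

theorem IsTheta.exists_col_eq_col (hA : ∀ i j, A i j ≠ 0) (hB : IsUnit B) (hB' : IsUnit B')
    (h : IsTheta A B M S) (h' : IsTheta A B' M S') (k : ι) : ∃ j, S.col j = S'.col k := by
  have hC : IsUnit (B⁻¹ * B') := (isUnit_nonsing_inv_iff.2 hB).mul hB'
  obtain ⟨j, hjk⟩ : ∃ j, (B⁻¹ * B') j k ≠ 0 := by
    by_contra! hzero
    exact ((isUnit_iff_isUnit_det _).1 hC).ne_zero (det_eq_zero_of_column_eq_zero k hzero)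
  refine ⟨j, funext fun i => ?_⟩
  have h_jk := congrFun (congrFun (h.diagonal_mul_inv_mul (hA · i) hB h') j) k
  rw [diagonal_mul, mul_diagonal, mul_comm] at h_jk
  exact mul_left_cancel₀ hjk h_jk

theorem InNomura.of_isTheta (hA : ∀ i j, A i j ≠ 0) (hB : IsUnit B) (hB' : IsUnit B')
    (h : IsTheta A B M' B) (h' : IsTheta A B' M' B') (hM : InNomura A B M) :
    InNomura A B' M := by
  intro i k
  obtain ⟨j, hjk⟩ := h.exists_col_eq_col hA hB hB' h' k
  have hcol : colProd A B i j = colProd A B' i k :=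
    funext fun l => congrArg (A l i * ·) (congrFun hjk l)
  exact hcol ▸ hM i j

theorem inNomura_iff_transpose_right (hA : ∀ i j, A i j ≠ 0) (hB : IsUnit B)
    (h : IsTheta A B A B) (ht : IsTheta A Bᵀ A Bᵀ) : InNomura A B M ↔ InNomura A Bᵀ M := by
  have hBt : IsUnit Bᵀ := (isUnit_transpose B).2 hB
  exact ⟨.of_isTheta hA hB hBt h ht, .of_isTheta hA hBt hB ht h⟩

end Columns

section TypeII

theorem IsTypeII.mul_inv_card_smul_sinv_transpose (hB : IsTypeII B) :
    B * ((Fintype.card ι : ℂ)⁻¹ • (sinv B)ᵀ) = 1 := by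
  cases isEmpty_or_nonempty ι
  · exact Subsingleton.elim _ _
  · rw [Matrix.mul_smul, hB.2, inv_smul_smul₀ (Nat.cast_ne_zero.2 Fintype.card_ne_zero)]

theorem IsTypeII.isUnit (hB : IsTypeII B) : IsUnit B :=
  .of_mul_eq_one _ hB.mul_inv_card_smul_sinv_transpose

theorem IsTypeII.sinv_transpose_mul (hB : IsTypeII B) :
    (sinv B)ᵀ * B = (Fintype.card ι : ℂ) • (1 : Matrix ι ι ℂ) := by
  cases isEmpty_or_nonempty ι
  · exact Subsingleton.elim _ _
  have hinv := mul_eq_one_comm.1 hB.mul_inv_card_smul_sinv_transpose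
  rwa [Matrix.smul_mul, inv_smul_eq_iff₀ (Nat.cast_ne_zero.2 Fintype.card_ne_zero)] at hinv

protected theorem IsTypeII.transpose (hB : IsTypeII B) : IsTypeII Bᵀ := by
  refine ⟨fun i j => hB.1 j i, ?_⟩
  have htranspose := congrArg Matrix.transpose hB.sinv_transpose_mul
  rwa [transpose_mul, transpose_transpose, transpose_smul, transpose_one] at htranspose

protected theorem IsTypeII.sinv (hB : IsTypeII B) : IsTypeII (sinv B) := by
  refine ⟨fun i j => inv_ne_zero (hB.1 i j), ?_⟩
  rw [sinv_sinv]
  exact hB.transpose.sinv_transpose_mul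

theorem card_mul_eq_one_of_sum_eq_one {κ R : Type*} [Fintype κ] [CommSemiring R] {a t : κ → R}
    (hrow : ∀ k, ∑ j, a k * t j = 1) (hcol : ∀ j, ∑ k, a k * t j = 1) (k j : κ) :
    (Fintype.card κ : R) * (a k * t j) = 1 := by
  have hcard : (Fintype.card κ : R) = (∑ k, a k) * ∑ j, t j := by
    simp only [Finset.sum_mul_sum, hrow, Finset.sum_const, Finset.card_univ, nsmul_eq_mul, mul_one]
  calc (Fintype.card κ : R) * (a k * t j) = (a k * ∑ j, t j) * ((∑ k, a k) * t j) := by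
        rw [hcard]; ring
    _ = 1 := by rw [Finset.mul_sum, hrow, Finset.sum_mul, hcol, one_mul]

theorem IsTheta.mul_inv_apply {k : ι} (hk : ∀ i, A k i ≠ 0) (hB : IsUnit B)
    (h : IsTheta A B A B) (j : ι) : B k j * B⁻¹ j k = A k k * ∑ l, B⁻¹ j l := by
  have hdet := (isUnit_iff_isUnit_det B).1 hB
  have hconst : B *ᵥ (fun q => B k q * B⁻¹ q k) = fun _ => A k k := by
    funext i
    have hconj : A * diagonal (A.col i) = diagonal (A.col i) * (B * diagonal (B i) * B⁻¹) := by
      rw [← mul_assoc, ← mul_assoc, ← isTheta_iff_mul_diagonal_col_mul.1 h,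
        mul_nonsing_inv_cancel_right _ _ hdet]
    have h_kk := congrFun (congrFun hconj k) k
    rw [mul_diagonal, diagonal_mul, mul_comm, mul_apply] at h_kk
    rw [mul_left_cancel₀ (hk i) h_kk]
    exact Finset.sum_congr rfl fun q _ => by rw [mul_diagonal]; ring
  have hsolve := congrArg (B⁻¹ *ᵥ ·) hconst
  simp only [mulVec_mulVec, nonsing_inv_mul _ hdet, one_mulVec] at hsolve
  rw [mul_comm (A k k), Finset.sum_mul]
  exact congrFun hsolve j

theorem IsTheta.isTypeII_right (hA : ∀ i j, A i j ≠ 0) (hB : IsUnit B) (h : IsTheta A B A B) :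
    IsTypeII B := by
  have hdet := (isUnit_iff_isUnit_det B).1 hB
  have hrow (k : ι) : ∑ j, A k k * ∑ l, B⁻¹ j l = 1 := by
    simp only [← h.mul_inv_apply (hA _) hB]
    rw [← mul_apply, mul_nonsing_inv _ hdet, one_apply_eq]
  have hcol (j : ι) : ∑ k, A k k * ∑ l, B⁻¹ j l = 1 := by
    simp only [← h.mul_inv_apply (hA _) hB, mul_comm (B _ _)]
    rw [← mul_apply, nonsing_inv_mul _ hdet, one_apply_eq]
  have hcard (k j : ι) : B k j * (Fintype.card ι * B⁻¹ j k) = 1 := by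
    rw [mul_left_comm, h.mul_inv_apply (hA _) hB]
    exact card_mul_eq_one_of_sum_eq_one hrow hcol k j
  have hsinv : (sinv B)ᵀ = (Fintype.card ι : ℂ) • B⁻¹ :=
    ext fun j k => inv_eq_of_mul_eq_one_right (hcard k j)
  refine ⟨fun k j => left_ne_zero_of_mul_eq_one (hcard k j), ?_⟩
  rw [hsinv, Matrix.mul_smul, mul_nonsing_inv _ hdet]

end TypeII

section Duality

theorem IsTypeII.isTheta_iff_mulVec (hA : ∀ i j, A i j ≠ 0) (hB : IsTypeII B) :
    IsTheta A B M S ↔ ∀ l k, S *ᵥ colProd Bᵀ (sinv B)ᵀ l k =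
      (Fintype.card ι * M l k) • colProd (sinv A)ᵀ Aᵀ l k := by
  have hmul (i : ι) :
      M * diagonal (A.col i) * B = diagonal (A.col i) * B * diagonal (S i) ↔
        (Fintype.card ι : ℂ) • (M * diagonal (A.col i)) =
          diagonal (A.col i) * (B * diagonal (S i) * (sinv B)ᵀ) := by
    rw [← hB.sinv.transpose.isUnit.mul_left_inj (b := M * diagonal (A.col i) * B),
      mul_assoc _ B, hB.2, Matrix.mul_smul, mul_one]
    simp only [mul_assoc]
  have hentry (i l k : ι) :
      ((Fintype.card ι : ℂ) • (M * diagonal (A.col i))) l k =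
          (diagonal (A.col i) * (B * diagonal (S i) * (sinv B)ᵀ)) l k ↔
        (S *ᵥ colProd Bᵀ (sinv B)ᵀ l k) i =
          ((Fintype.card ι * M l k) • colProd (sinv A)ᵀ Aᵀ l k) i := by
    have hsum : (B * diagonal (S i) * (sinv B)ᵀ) l k = (S *ᵥ colProd Bᵀ (sinv B)ᵀ l k) i := by
      rw [mul_apply]
      exact Finset.sum_congr rfl fun j _ => by
        rw [mul_diagonal, mul_comm (B l j), mul_assoc]; rfl
    rw [Matrix.smul_apply, mul_diagonal, diagonal_mul, hsum, eq_comm]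
    refine (eq_inv_mul_iff_mul_eq₀ (hA l i)).symm.trans (Eq.congr_right ?_)
    simp only [Pi.smul_apply, colProd, sinv, transpose_apply, of_apply, col_apply, smul_eq_mul]
    ring
  simp only [isTheta_iff_mul_diagonal_col_mul, hmul, ← Matrix.ext_iff, hentry, funext_iff]
  exact ⟨fun h l k i => h i l k, fun h i l k => h l k i⟩

theorem IsTypeII.isTheta_sinv_right_iff (hB : IsTypeII B) :
    IsTheta B (sinv B) M S ↔ IsTheta (sinv B)ᵀ Bᵀ S ((Fintype.card ι : ℂ) • M) := by
  rw [hB.sinv.isTheta_iff_mulVec hB.1, sinv_sinv]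
  rfl

theorem IsTypeII.isTheta_transpose_iff (hB : IsTypeII B) :
    IsTheta B (sinv B) Mᵀ Sᵀ ↔ IsTheta B (sinv B) M S := by
  have hdual := hB.sinv.isTheta_sinv_right_iff (M := M) (S := Sᵀ)
  rw [sinv_sinv] at hdual
  rw [hB.isTheta_sinv_right_iff, ← transpose_smul, ← isTheta_comm, ← hdual, ← isTheta_comm]

theorem IsTheta.mul_left_iff (hA : ∀ i j, A i j ≠ 0) (hB : IsTypeII B) (h : IsTheta A B A B) :
    IsTheta A B M (B * F) ↔ IsTheta Bᵀ (sinv B)ᵀ F (M ⊙ sinv A) := by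
  rw [hB.isTheta_iff_mulVec hA] at h ⊢
  refine forall₂_congr fun l k => ?_
  have hscale : (Fintype.card ι * M l k) • colProd (sinv A)ᵀ Aᵀ l k =
      B *ᵥ ((M ⊙ sinv A) l k • colProd Bᵀ (sinv B)ᵀ l k) := by
    rw [mulVec_smul, h, smul_smul]
    congr 1
    simp only [hadamard_apply, sinv, of_apply]
    field_simp [hA l k]
  rw [hscale, ← mulVec_mulVec, (mulVec_injective_iff_isUnit.2 hB.isUnit).eq_iff]

end Duality

theorem inNomura_iff_exists_isTheta_hadamard (hA : ∀ i j, A i j ≠ 0) (hB : IsUnit B)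
    (h : IsTheta A B A B) :
    InNomura A B M ↔ ∃ F, IsTheta Bᵀ (sinv B)ᵀ F (M ⊙ sinv A) := by
  simp only [← h.mul_left_iff hA (h.isTypeII_right hA hB), inNomura_iff_exists_isTheta]
  refine ⟨fun ⟨S, hS⟩ => ⟨B⁻¹ * S, ?_⟩, fun ⟨F, hF⟩ => ⟨B * F, hF⟩⟩
  rwa [mul_nonsing_inv_cancel_left _ _ ((isUnit_iff_isUnit_det B).1 hB)]

theorem inNomura_transpose_iff (hA : ∀ i j, A i j ≠ 0) (hB : IsUnit B) (h : IsTheta A B A B)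
    (hsymm : Aᵀ = A) : InNomura A B Mᵀ ↔ InNomura A B M := by
  have hBt : IsTypeII Bᵀ := (h.isTypeII_right hA hB).transpose
  have hhad : Mᵀ ⊙ sinv A = (M ⊙ sinv A)ᵀ := by
    rw [transpose_hadamard]
    exact congrArg (Mᵀ ⊙ sinv ·) hsymm.symm
  rw [inNomura_iff_exists_isTheta_hadamard hA hB h, inNomura_iff_exists_isTheta_hadamard hA hB h,
    hhad]
  exact (Matrix.transposeAddEquiv ι ι ℂ).surjective.exists.trans <|
    exists_congr fun _ => hBt.isTheta_transpose_iff

theorem NAB_eq_NABt_general (hA : ∀ i j, A i j ≠ 0) (hB : IsUnit B) (h : IsTheta A B A B)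
    (ht : IsTheta A Bᵀ A Bᵀ) :
    {M | InNomura A B M} = {M | InNomura A Bᵀ M} ∧
      (Aᵀ = A → ∀ M, InNomura A B M ↔ InNomura A B Mᵀ) :=
  ⟨Set.ext fun _ => inNomura_iff_transpose_right hA hB h ht,
    fun hsymm _ => (inNomura_transpose_iff hA hB h hsymm).symm⟩

theorem NAB_eq_NABt {n : ℕ} (hn : 0 < n)
    (A B : Matrix (Fin n) (Fin n) ℂ) (h : IsInvertibleJonesPair A B) :
    ({M : Matrix (Fin n) (Fin n) ℂ | InNomura A B M} =
      {M : Matrix (Fin n) (Fin n) ℂ | InNomura A Bᵀ M}) ∧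
    (Aᵀ = A → ∀ M : Matrix (Fin n) (Fin n) ℂ, InNomura A B M ↔ InNomura A B Mᵀ) := by
  obtain ⟨⟨-, -, hjones, hjonest⟩, hA, hB⟩ := h
  exact NAB_eq_NABt_general hA hB (isTheta_self_of_mul_hadamard hjones)
    (isTheta_self_of_mul_hadamard hjonest)
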